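/- Let n ≥ 1, let J be a fixed perfect matching of Fin (2n), and let μ be a partition of n with m_j parts equal to j for each j ≥ 1 and ℓ(μ) parts in total. Then the number of perfect matchings B of Fin (2n) with d(J,B) = 2μ equals 2^n · n! / (z_μ · 2^{ℓ(μ)}), where z_μ = ∏_{j ≥ 1} j^{m_j} · m_j!. -/

import Mathlib

/-- The multiset of cardinalities of the orbits of a subgroup of permutations
acting on a finite type. -/
noncomputable def orbitSizes {α : Type*} [Fintype α] (G : Subgroup (Equiv.Perm α)) :
    Multiset ℕ :=
  letI : Fintype (Quotient (MulAction.orbitRel G α)) := Fintype.ofFinite _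
  (Finset.univ : Finset (Quotient (MulAction.orbitRel G α))).val.map
    fun q => Nat.card (MulAction.orbit G q.out)

/-- `d(A,B)`. -/
noncomputable def dMatch {N : ℕ} (A B : Equiv.Perm (Fin N)) : Multiset ℕ :=
  orbitSizes (Subgroup.closure {A, B})

/-- Doubling every part of a partition (as a multiset). -/
def twice (m : Multiset ℕ) : Multiset ℕ := m.map (fun i => 2 * i)

/-- Perfect matchings of the complete graph on `Fin N`. -/
abbrev PerfMatching (N : ℕ) := {A : Equiv.Perm (Fin N) // A * A = 1 ∧ ∀ x, A x ≠ x}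

/-- `z_μ = ∏_{j≥1} j^{m_j} · m_j!` where `m_j` is the multiplicity of `j` as a part
of `μ`. -/
def zPart (n : ℕ) (μ : Nat.Partition n) : ℕ :=
  ∏ j ∈ Finset.range (n + 1), j ^ (μ.parts.count j) * (μ.parts.count j).factorial

/-!
Count the pairs `(B, c)` where `d(J, B) = 2μ` and `c` is a two-colouring of the points that `J` and
`B` both flip. A colouring flipped by `J` and `B` exists because `J ∪ B` is a union of even cycles,
and any two of them differ by a choice on each orbit of `⟨J, B⟩`. So each `B` occurs with `2 ^ ℓ(μ)`
colourings, and `J` alone flips `2 ^ n` of them. For a fixed `c`, the product `J * B` preserves each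
colour class, and its restriction `σ` to one of them determines `B` as `σ⁻¹ * J * σ`. The orbits of
`⟨J, B⟩` are twice as large as the cycles of `σ`, so `c` occurs as often as there are permutations
of `n` points with cycle type `μ`, which is `n! / z_μ` times.
-/

open MulAction Equiv.Perm

section Involutions

variable {G X : Type*} [Group G] [MulAction G X] {a b : G}

theorem semiconjBy_mul_of_mul_self_eq_one (ha : a * a = 1) (hb : b * b = 1) :
    SemiconjBy a (a * b) (a * b)⁻¹ := by
  rw [SemiconjBy, mul_inv_rev, inv_eq_of_mul_eq_one_left ha, inv_eq_of_mul_eq_one_left hb,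
    mul_assoc, ha, ← mul_assoc, ha, one_mul, mul_one]

theorem smul_zpow_smul_of_mul_self_eq_one (ha : a * a = 1) (hb : b * b = 1) (k : ℤ) (x : X) :
    a • (a * b) ^ k • x = (a * b) ^ (-k) • a • x := by
  rw [smul_smul, smul_smul, ((semiconjBy_mul_of_mul_self_eq_one ha hb).zpow_right k).eq,
    inv_zpow']

theorem smul_mem_orbit_zpowers_mul (ha : a * a = 1) (hb : b * b = 1) {x y : X}
    (h : y ∈ orbit (Subgroup.zpowers (a * b)) x) :
    a • y ∈ orbit (Subgroup.zpowers (a * b)) (a • x) := by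
  obtain ⟨⟨_, k, rfl⟩, rfl⟩ := h
  exact ⟨⟨_, -k, rfl⟩, (smul_zpow_smul_of_mul_self_eq_one ha hb k x).symm⟩

-- If `a • x = (a * b) ^ k • x`, then the point halfway along the cycle is fixed by `a` or by `b`,
-- according to the parity of `k`.
theorem smul_notMem_orbit_zpowers_mul (ha : a * a = 1) (hb : b * b = 1)
    (ha' : ∀ x : X, a • x ≠ x) (hb' : ∀ x : X, b • x ≠ x) (x : X) :
    a • x ∉ orbit (Subgroup.zpowers (a * b)) x := by
  rintro ⟨⟨_, k, rfl⟩, hk : (a * b) ^ k • x = a • x⟩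
  obtain ⟨m, rfl | rfl⟩ := Int.even_or_odd' k
  · apply ha' ((a * b) ^ m • x)
    rw [smul_zpow_smul_of_mul_self_eq_one ha hb, ← hk, smul_smul, ← zpow_add]
    congr 2
    ring
  · apply hb' ((a * b) ^ m • x)
    have hb_eq : b = a * (a * b) := by rw [← mul_assoc, ha, one_mul]
    calc b • (a * b) ^ m • x = a • (a * b) ^ (1 + m) • x := by
          rw [zpow_add, zpow_one, mul_smul, smul_smul a, ← hb_eq]
      _ = (a * b) ^ m • x := by
          rw [smul_zpow_smul_of_mul_self_eq_one ha hb, ← hk, smul_smul, ← zpow_add]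
          congr 2
          ring

open scoped Pointwise in
theorem orbit_closure_pair (ha : a * a = 1) (hb : b * b = 1) (x : X) :
    orbit (Subgroup.closure {a, b}) x =
      orbit (Subgroup.zpowers (a * b)) x ∪ a • orbit (Subgroup.zpowers (a * b)) x := by
  set O := orbit (Subgroup.zpowers (a * b)) x
  have ha_mem : a ∈ Subgroup.closure {a, b} := Subgroup.subset_closure (by simp)
  have hb_mem : b ∈ Subgroup.closure {a, b} := Subgroup.subset_closure (by simp)
  have hO : (a * b) • O = O :=
    smul_orbit (⟨a * b, Subgroup.mem_zpowers _⟩ : Subgroup.zpowers (a * b)) x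
  have hbO : b • O = a • O := by
    rw [← hO, smul_smul a, ← mul_assoc, ha, one_mul, hO]
  have hbaO : b • a • O = O := by
    rw [← hbO, smul_smul, hb, one_smul]
  have hstab : Subgroup.closure {a, b} ≤ stabilizer G (O ∪ a • O) := by
    rw [Subgroup.closure_le, Set.pair_subset_iff]
    constructor
    · change a • (O ∪ a • O) = _
      rw [Set.smul_set_union, smul_smul, ha, one_smul, Set.union_comm]
    · change b • (O ∪ a • O) = _
      rw [Set.smul_set_union, hbaO, hbO, Set.union_comm]
  apply Set.Subset.antisymm
  · rintro _ ⟨⟨g, hg⟩, rfl⟩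
    rw [← mem_stabilizer_iff.1 (hstab hg)]
    exact Set.smul_mem_smul_set (Or.inl (mem_orbit_self x))
  · rw [Set.union_subset_iff]
    constructor
    · rintro _ ⟨⟨_, k, rfl⟩, rfl⟩
      exact ⟨⟨_, zpow_mem (mul_mem ha_mem hb_mem) k⟩, rfl⟩
    · rintro _ ⟨_, ⟨⟨_, k, rfl⟩, rfl⟩, rfl⟩
      exact ⟨⟨_, mul_mem ha_mem (zpow_mem (mul_mem ha_mem hb_mem) k)⟩, mul_smul _ _ _⟩

end Involutions

section Colorings

/-- `c` is a proper two-colouring of the graph on `α` with edges `x — f x`. -/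
def Flips {α : Type*} (f : α → α) (c : α → Bool) : Prop := ∀ x, c (f x) = !c x

theorem exists_flips_of_involutive {α : Type*} {f : α → α} (hf : Function.Involutive f)
    (hne : ∀ x, f x ≠ x) : ∃ c, Flips f c := by
  classical
  let := linearOrderOfSTO (WellOrderingRel (α := α))
  refine ⟨fun x => decide (x < f x), fun x => ?_⟩
  rcases (hne x).lt_or_gt with h | h <;> simp [hf x, h, h.le]

-- The union of the two matchings is bipartite: `a` pairs off the cycles of `a * b`, and a colouring
-- of the cycles that `a` flips is a colouring of the points that `b` flips too.
theorem exists_flips_smul_and_flips_smul {G X : Type*} [Group G] [MulAction G X] {a b : G}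
    (ha : a * a = 1) (hb : b * b = 1) (ha' : ∀ x : X, a • x ≠ x) (hb' : ∀ x : X, b • x ≠ x) :
    ∃ c : X → Bool, Flips (a • ·) c ∧ Flips (b • ·) c := by
  let Q := orbitRel.Quotient (Subgroup.zpowers (a * b)) X
  let swap : Q → Q := Quotient.map (a • ·) fun _ _ => smul_mem_orbit_zpowers_mul ha hb
  have swap_involutive : Function.Involutive swap := by
    rintro ⟨x⟩
    exact congrArg (Quotient.mk _) (show a • a • x = x by rw [smul_smul, ha, one_smul])
  have swap_ne (q : Q) : swap q ≠ q := by
    induction q using Quotient.inductionOn with | _ x =>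
    exact fun h => smul_notMem_orbit_zpowers_mul ha hb ha' hb' x (Quotient.exact h)
  obtain ⟨c, hc⟩ := exists_flips_of_involutive swap_involutive swap_ne
  have hac : Flips (a • ·) fun x : X => c ⟦x⟧ := fun x => hc ⟦x⟧
  refine ⟨_, hac, fun x => ?_⟩
  have hab : (⟦a • b • x⟧ : Q) = ⟦x⟧ :=
    Quotient.sound ⟨⟨a * b, Subgroup.mem_zpowers _⟩, mul_smul a b x⟩
  have := hac (b • x)
  simp only [hab] at this
  simp [this]

theorem Flips.apply_ne {α : Type*} {f : α → α} {c : α → Bool} (hc : Flips f c) (x : α) :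
    f x ≠ x := fun h => Bool.not_ne_self (c x) (by rw [← hc x, h])

theorem Flips.two_mul_card {α : Type*} [Fintype α] {J : Equiv.Perm α} {c : α → Bool}
    (hc : Flips J c) : 2 * Fintype.card {x // c x} = Fintype.card α := by
  have e : {x // c x} ≃ {x // ¬c x} := J.subtypeEquiv fun x => by simp [hc x]
  rw [← Fintype.card_congr (Equiv.sumCompl (c · = true)), Fintype.card_sum,
    ← Fintype.card_congr e, two_mul]

theorem apply_eq_of_mem_closure {α β : Type*} {S : Set (Equiv.Perm α)} {f : α → β}
    (hf : ∀ A ∈ S, ∀ x, f (A x) = f x) {g : Equiv.Perm α} (hg : g ∈ Subgroup.closure S) (x : α) :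
    f (g x) = f x := by
  induction hg using Subgroup.closure_induction generalizing x with
  | mem A hA => exact hf A hA x
  | one => rfl
  | mul g h _ _ hg hh => rw [mul_apply, hg, hh]
  | inv g _ hg => rw [← hg, ← mul_apply, mul_inv_cancel, one_apply]

/-- Two colourings flipped by all of `S` differ by a function on the orbits of the group that `S`
generates. -/
def flipsEquiv {α : Type*} {S : Set (Equiv.Perm α)} {c₀ : α → Bool}
    (h₀ : ∀ A ∈ S, Flips A c₀) :
    {c : α → Bool // ∀ A ∈ S, Flips A c} ≃
      (orbitRel.Quotient (Subgroup.closure S) α → Bool) where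
  toFun c := Quotient.lift (fun x => c.1 x ^^ c₀ x) <| by
    rintro _ x ⟨g, rfl⟩
    exact apply_eq_of_mem_closure (f := fun x => c.1 x ^^ c₀ x)
      (fun A hA x => by simp [c.2 A hA x, h₀ A hA x]) g.2 x
  invFun f := ⟨fun x => f ⟦x⟧ ^^ c₀ x, fun A hA x => by
    have h : (⟦A x⟧ : orbitRel.Quotient (Subgroup.closure S) α) = ⟦x⟧ :=
      Quotient.sound ⟨⟨A, Subgroup.subset_closure hA⟩, rfl⟩
    simp [h, h₀ A hA x]⟩
  left_inv c := by
    ext x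
    simp
  right_inv f := by
    ext q
    induction q using Quotient.inductionOn with | _ x => simp

theorem card_forall_flips {α : Type*} [Fintype α] {S : Set (Equiv.Perm α)} {c₀ : α → Bool}
    (h₀ : ∀ A ∈ S, Flips A c₀) :
    Nat.card {c : α → Bool // ∀ A ∈ S, Flips A c} =
      2 ^ Multiset.card (orbitSizes (Subgroup.closure S)) := by
  rw [Nat.card_congr (flipsEquiv h₀), Nat.card_fun, Nat.card_eq_fintype_card (α := Bool),
    Fintype.card_bool, orbitSizes, Multiset.card_map, Finset.card_val]
  exact congrArg (2 ^ ·) (@Nat.card_eq_fintype_card _ (Fintype.ofFinite _))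

end Colorings

section OrbitSizes

theorem mul_count_map_eq_card {α ι : Type*} [Finite α] {t : Finset ι} {size : ι → ℕ} {f : α → ι}
    (h : ∀ i ∈ t, Nat.card {x // f x = i} = size i) (j : ℕ) :
    j * (t.val.map size).count j = Nat.card {x // f x ∈ t ∧ size (f x) = j} := by
  classical
  have := Fintype.ofFinite α
  rw [Multiset.count_map, ← Finset.filter_val, Finset.card_val, Nat.card_eq_fintype_card,
    Fintype.card_subtype,
    Finset.card_eq_sum_card_fiberwise (f := f) (t := {i ∈ t | j = size i}) fun x hx => by
      simpa [eq_comm] using hx, mul_comm, ← smul_eq_mul, ← Finset.sum_const]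
  refine Finset.sum_congr rfl fun i hi => ?_
  obtain ⟨hit, hij⟩ := Finset.mem_filter.1 hi
  refine (hij.trans (h i hit).symm).trans ?_
  rw [Nat.card_eq_fintype_card, Fintype.card_subtype, Finset.filter_filter]
  congr 1
  ext x
  simp only [Finset.mem_filter, Finset.mem_univ, true_and]
  grind

variable {α : Type*} [Fintype α]

theorem orbitSizes_eq_map (G : Subgroup (Equiv.Perm α)) [Fintype (orbitRel.Quotient G α)] :
    orbitSizes G = (Finset.univ : Finset (orbitRel.Quotient G α)).val.map
      fun q => Nat.card q.orbit := by
  simp_rw [orbitRel.Quotient.orbit_eq_orbit_out _ Quotient.out_eq']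
  unfold orbitSizes
  congr!

theorem zero_notMem_orbitSizes (G : Subgroup (Equiv.Perm α)) : 0 ∉ orbitSizes G := by
  intro h
  obtain ⟨q, -, hq⟩ := Multiset.mem_map.1 h
  have := (nonempty_orbit (M := G) q.out).to_subtype
  exact Nat.card_pos.ne' hq

theorem mul_count_orbitSizes (G : Subgroup (Equiv.Perm α)) (j : ℕ) :
    j * (orbitSizes G).count j = Nat.card {x : α // Nat.card (orbit G x) = j} := by
  classical
  have := Fintype.ofFinite (orbitRel.Quotient G α)
  rw [orbitSizes_eq_map, mul_count_map_eq_card (f := Quotient.mk'') fun q _ =>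
    Nat.card_congr (Equiv.subtypeEquivRight fun _ => orbitRel.Quotient.mem_orbit.symm)]
  simp

theorem mem_orbit_zpowers_iff_sameCycle {β : Type*} {σ : Equiv.Perm β} {x y : β} :
    y ∈ orbit (Subgroup.zpowers σ) x ↔ σ.SameCycle x y := by
  constructor
  · rintro ⟨⟨_, k, rfl⟩, rfl⟩
    exact ⟨k, rfl⟩
  · rintro ⟨k, rfl⟩
    exact ⟨⟨_, k, rfl⟩, rfl⟩

theorem card_orbit_zpowers_of_apply_eq {β : Type*} {σ : Equiv.Perm β} {x : β} (hx : σ x = x) :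
    Nat.card (orbit (Subgroup.zpowers σ) x) = 1 := by
  have : orbit (Subgroup.zpowers σ) x = {x} := by
    ext y
    rw [mem_orbit_zpowers_iff_sameCycle, Set.mem_singleton_iff]
    exact ⟨fun hy => (hy.eq_of_left hx).symm, fun hy => hy ▸ SameCycle.refl _ _⟩
  rw [this, Nat.card_unique]

variable [DecidableEq α] (σ : Equiv.Perm α)

theorem card_orbit_zpowers_of_apply_ne {x : α} (hx : σ x ≠ x) :
    Nat.card (orbit (Subgroup.zpowers σ) x) = (σ.cycleOf x).support.card := by
  have : orbit (Subgroup.zpowers σ) x = (σ.cycleOf x).support := by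
    ext y
    rw [mem_orbit_zpowers_iff_sameCycle, Finset.mem_coe, mem_support_cycleOf_iff' hx]
  rw [this, Nat.card_coe_set_eq, Set.ncard_coe_finset]

theorem mul_count_cycleType (j : ℕ) :
    j * σ.cycleType.count j =
      Nat.card {x // σ x ≠ x ∧ Nat.card (orbit (Subgroup.zpowers σ) x) = j} := by
  rw [cycleType_def, mul_count_map_eq_card (f := σ.cycleOf)]
  · refine Nat.card_congr (Equiv.subtypeEquivRight fun x => ?_)
    rw [cycleOf_mem_cycleFactorsFinset_iff, mem_support]
    exact and_congr_right fun hx => by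
      rw [card_orbit_zpowers_of_apply_ne σ hx, Function.comp_apply]
  · intro c hc
    simp_rw [eq_comm (b := c), eq_cycleOf_of_mem_cycleFactorsFinset_iff σ c hc]
    rw [Nat.card_eq_fintype_card, Fintype.card_coe, Function.comp_apply]

theorem mul_count_replicate_one (j : ℕ) :
    j * (Multiset.replicate (Fintype.card α - σ.support.card) 1).count j =
      Nat.card {x // σ x = x ∧ Nat.card (orbit (Subgroup.zpowers σ) x) = j} := by
  have h (x : α) : (σ x = x ∧ Nat.card (orbit (Subgroup.zpowers σ) x) = j) ↔
      x ∈ σ.supportᶜ ∧ 1 = j := by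
    rw [Finset.mem_compl, notMem_support]
    exact and_congr_right fun hx => by rw [card_orbit_zpowers_of_apply_eq hx]
  rw [Multiset.count_replicate, Nat.card_congr (Equiv.subtypeEquivRight h), ← Finset.card_compl]
  by_cases hj : 1 = j
  · subst hj
    simp only [and_true, if_true, one_mul, Nat.card_eq_fintype_card, Fintype.card_coe]
  · simp [hj]

theorem orbitSizes_zpowers : orbitSizes (Subgroup.zpowers σ) = σ.partition.parts := by
  ext j
  rcases j.eq_zero_or_pos with rfl | hj
  · rw [Multiset.count_eq_zero_of_notMem (zero_notMem_orbitSizes _),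
      Multiset.count_eq_zero_of_notMem fun h => (σ.partition.parts_pos h).ne rfl]
  apply Nat.eq_of_mul_eq_mul_left hj
  rw [parts_partition, Multiset.count_add, mul_add, mul_count_cycleType,
    mul_count_replicate_one, mul_count_orbitSizes]
  simp only [Nat.card_eq_fintype_card, Fintype.card_subtype]
  rw [← Finset.card_filter_add_card_filter_not (fun x => σ x ≠ x), Finset.filter_filter,
    Finset.filter_filter]
  simp only [not_not, and_comm]

end OrbitSizes

section ColorPerm

variable {α : Type*} {J B : Equiv.Perm α} {c : α → Bool}

/-- The permutation that `J * B` induces on a colour class, when `J` and `B` both flip `c`. -/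
def colorPerm (hJ : Flips J c) (hB : Flips B c) : Equiv.Perm {x // c x} :=
  (J * B).subtypePerm fun x => by simp [hJ (B x), hB x]

theorem coe_image_orbit_zpowers_colorPerm (hJ : Flips J c) (hB : Flips B c) (x : {x // c x}) :
    (↑) '' orbit (Subgroup.zpowers (colorPerm hJ hB)) x =
      orbit (Subgroup.zpowers (J * B)) (x : α) := by
  have coe_zpow (k : ℤ) : ((colorPerm hJ hB ^ k) x : α) = ((J * B) ^ k) x := by
    rw [colorPerm, subtypePerm_zpow, subtypePerm_apply]
  ext y
  simp only [Set.mem_image, mem_orbit_zpowers_iff_sameCycle]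
  constructor
  · rintro ⟨_, ⟨k, rfl⟩, rfl⟩
    exact ⟨k, (coe_zpow k).symm⟩
  · rintro ⟨k, rfl⟩
    exact ⟨_, ⟨k, rfl⟩, coe_zpow k⟩

theorem orbit_closure_pair_eq_union_image (hJJ : J * J = 1) (hBB : B * B = 1) (hJ : Flips J c)
    (hB : Flips B c) (x : {x // c x}) :
    orbit (Subgroup.closure {J, B}) (x : α) =
      (↑) '' orbit (Subgroup.zpowers (colorPerm hJ hB)) x ∪
        (J ∘ (↑)) '' orbit (Subgroup.zpowers (colorPerm hJ hB)) x := by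
  rw [orbit_closure_pair hJJ hBB, ← coe_image_orbit_zpowers_colorPerm hJ hB, ← Set.image_smul,
    Set.image_image]
  rfl

theorem Flips.coe_ne_apply_coe (hJ : Flips J c) (x y : {x // c x}) : (x : α) ≠ J y := by
  intro h
  have := hJ y
  rw [← h, x.2, y.2] at this
  contradiction

theorem card_orbit_closure_pair [Finite α] (hJJ : J * J = 1) (hBB : B * B = 1)
    (hJ : Flips J c) (hB : Flips B c) (x : {x // c x}) :
    Nat.card (orbit (Subgroup.closure {J, B}) (x : α)) =
      2 * Nat.card (orbit (Subgroup.zpowers (colorPerm hJ hB)) x) := by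
  rw [orbit_closure_pair_eq_union_image hJJ hBB hJ hB, Nat.card_coe_set_eq, Nat.card_coe_set_eq,
    Set.ncard_union_eq, Set.ncard_image_of_injective _ Subtype.val_injective,
    Set.ncard_image_of_injective _ (J.injective.comp Subtype.val_injective), two_mul]
  rw [Set.disjoint_left]
  rintro _ ⟨z, -, rfl⟩ ⟨w, -, h⟩
  exact hJ.coe_ne_apply_coe z w h.symm

theorem coe_mem_orbit_closure_pair_iff (hJJ : J * J = 1) (hBB : B * B = 1) (hJ : Flips J c)
    (hB : Flips B c) (x y : {x // c x}) :
    (x : α) ∈ orbit (Subgroup.closure {J, B}) (y : α) ↔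
      x ∈ orbit (Subgroup.zpowers (colorPerm hJ hB)) y := by
  rw [orbit_closure_pair_eq_union_image hJJ hBB hJ hB]
  constructor
  · rintro (⟨z, hz, h⟩ | ⟨z, -, h⟩)
    · rwa [← Subtype.ext h]
    · exact absurd h.symm (hJ.coe_ne_apply_coe x z)
  · exact fun h => Or.inl ⟨x, h, rfl⟩

/-- Every orbit of the group generated by `J` and `B` meets the colour class in exactly one cycle of
`J * B`. -/
noncomputable def cyclesEquivOrbits (hJJ : J * J = 1) (hBB : B * B = 1) (hJ : Flips J c)
    (hB : Flips B c) :
    orbitRel.Quotient (Subgroup.zpowers (colorPerm hJ hB)) {x // c x} ≃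
      orbitRel.Quotient (Subgroup.closure {J, B}) α :=
  Equiv.ofBijective
    (Quotient.map (↑) fun x y => (coe_mem_orbit_closure_pair_iff hJJ hBB hJ hB x y).2) <| by
      constructor
      · rintro ⟨x⟩ ⟨y⟩ h
        exact Quotient.sound
          ((coe_mem_orbit_closure_pair_iff hJJ hBB hJ hB x y).1 (Quotient.exact h))
      · rintro ⟨y⟩
        by_cases hy : c y
        · exact ⟨⟦⟨y, hy⟩⟧, rfl⟩
        · exact ⟨⟦⟨J y, by simpa [hJ y] using hy⟩⟧,
            Quotient.sound ⟨⟨J, Subgroup.subset_closure (by simp)⟩, rfl⟩⟩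

theorem orbitSizes_closure_pair [Fintype α] [DecidableEq α] (hJJ : J * J = 1) (hBB : B * B = 1)
    (hJ : Flips J c) (hB : Flips B c) :
    orbitSizes (Subgroup.closure {J, B}) = twice (colorPerm hJ hB).partition.parts := by
  have := Fintype.ofFinite (orbitRel.Quotient (Subgroup.closure {J, B}) α)
  have := Fintype.ofFinite (orbitRel.Quotient (Subgroup.zpowers (colorPerm hJ hB)) {x // c x})
  rw [← orbitSizes_zpowers, orbitSizes_eq_map, orbitSizes_eq_map, twice, Multiset.map_map,
    ← Multiset.map_univ_val_equiv (cyclesEquivOrbits hJJ hBB hJ hB), Multiset.map_map]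
  refine Multiset.map_congr rfl fun q _ => ?_
  induction q using Quotient.inductionOn with | _ x =>
  exact card_orbit_closure_pair hJJ hBB hJ hB x

theorem orbitSizes_closure_singleton [Fintype α] (hJJ : J * J = 1) (hJ : Flips J c) :
    orbitSizes (Subgroup.closure {J}) = Multiset.replicate (Fintype.card {x // c x}) 2 := by
  have h_one : colorPerm hJ hJ = 1 := by
    ext x
    simp [colorPerm, hJJ]
  classical
  rw [← Set.pair_eq_singleton J, orbitSizes_closure_pair hJJ hJJ hJ hJ, h_one, parts_partition,
    twice]
  simp

theorem apply_ofSubtype_apply (c : α → Bool) (σ : Equiv.Perm {x // c x}) (x : α) :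
    c (ofSubtype σ x) = c x :=
  Bool.eq_iff_iff.2 (ofSubtype_apply_mem_iff_mem (p := fun x => c x = true) σ x)

theorem Flips.conj_ofSubtype (hJ : Flips J c) (σ : Equiv.Perm {x // c x}) :
    Flips ⇑(ofSubtype σ⁻¹ * J * ofSubtype σ) c := fun x => by
  rw [mul_apply, mul_apply, apply_ofSubtype_apply c, hJ, apply_ofSubtype_apply c]

theorem colorPerm_conj_ofSubtype (hJJ : J * J = 1) (hJ : Flips J c)
    (σ : Equiv.Perm {x // c x}) : colorPerm hJ (hJ.conj_ofSubtype σ) = σ := by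
  ext x
  have hx : ¬c (J (σ x)) := by simp [hJ (σ x), (σ x).2]
  change J (ofSubtype σ⁻¹ (J (ofSubtype σ x))) = σ x
  rw [ofSubtype_apply_coe, ofSubtype_apply_of_not_mem σ⁻¹ hx]
  exact Equiv.congr_fun hJJ _

theorem conj_ofSubtype_colorPerm (hJJ : J * J = 1) (hBB : B * B = 1) (hJ : Flips J c)
    (hB : Flips B c) :
    ofSubtype (colorPerm hJ hB)⁻¹ * J * ofSubtype (colorPerm hJ hB) = B := by
  rw [map_inv, mul_assoc, inv_mul_eq_iff_eq_mul]
  ext x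
  rw [mul_apply, mul_apply]
  by_cases hx : c x
  · have hBx : ¬c (B x) := by simp [hB x, hx]
    rw [ofSubtype_apply_of_mem (colorPerm hJ hB) hx,
      ofSubtype_apply_of_not_mem (colorPerm hJ hB) hBx]
    exact Equiv.congr_fun hJJ _
  · have hBx : c (B x) := by simpa [hB x] using hx
    rw [ofSubtype_apply_of_not_mem (colorPerm hJ hB) hx,
      ofSubtype_apply_of_mem (colorPerm hJ hB) hBx]
    exact congrArg J (Equiv.congr_fun hBB x).symm

/-- The involutions flipping `c` correspond to the permutations of a colour class. -/
def flippingInvolutionsEquivPerm (hJJ : J * J = 1) (hJ : Flips J c) :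
    {B : Equiv.Perm α // B * B = 1 ∧ Flips B c} ≃ Equiv.Perm {x // c x} where
  toFun B := colorPerm hJ B.2.2
  invFun σ := ⟨ofSubtype σ⁻¹ * J * ofSubtype σ, by
    simp [mul_assoc, ← mul_assoc J J, hJJ], hJ.conj_ofSubtype σ⟩
  left_inv B := Subtype.ext (conj_ofSubtype_colorPerm hJJ B.2.1 hJ B.2.2)
  right_inv := colorPerm_conj_ofSubtype hJJ hJ

end ColorPerm

section Partitions

variable {n : ℕ} (μ : n.Partition)

theorem filter_two_le_add_replicate_one :
    μ.parts.filter (2 ≤ ·) + Multiset.replicate (μ.parts.count 1) 1 = μ.parts := by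
  have h : μ.parts.filter (¬2 ≤ ·) = μ.parts.filter (· = 1) :=
    Multiset.filter_congr fun j hj => by
      have : 0 < j := μ.parts_pos hj
      omega
  rw [← Multiset.filter_eq', ← h, Multiset.filter_add_not]

theorem sum_filter_two_le_add_count_one :
    (μ.parts.filter (2 ≤ ·)).sum + μ.parts.count 1 = n := by
  simpa [μ.parts_sum] using congrArg Multiset.sum (filter_two_le_add_replicate_one μ)

theorem parts_eq_iff_filter_two_le_eq {μ ν : n.Partition} :
    μ.parts = ν.parts ↔ μ.parts.filter (2 ≤ ·) = ν.parts.filter (2 ≤ ·) := by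
  refine ⟨fun h => by rw [h], fun h => ?_⟩
  have hμ := sum_filter_two_le_add_count_one μ
  have hν := sum_filter_two_le_add_count_one ν
  rw [h] at hμ
  rw [← filter_two_le_add_replicate_one μ, ← filter_two_le_add_replicate_one ν, h]
  congr 2
  omega

theorem zPart_eq_factorial_mul_prod :
    zPart n μ = (μ.parts.count 1).factorial * (μ.parts.filter (2 ≤ ·)).prod *
      ∏ j ∈ (μ.parts.filter (2 ≤ ·)).toFinset,
        ((μ.parts.filter (2 ≤ ·)).count j).factorial := by
  set m := μ.parts.filter (2 ≤ ·)
  have hm_count (j : ℕ) : m.count j = if 2 ≤ j then μ.parts.count j else 0 :=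
    Multiset.count_filter
  have hm_sub : m.toFinset ⊆ Finset.range (n + 1) := fun j hj =>
    Finset.mem_range_succ_iff.2 <| Nat.Partition.le_of_mem_parts <|
      Multiset.mem_of_mem_filter (Multiset.mem_toFinset.1 hj)
  have h_zero : μ.parts.count 0 = 0 :=
    Multiset.count_eq_zero_of_notMem fun h => (μ.parts_pos h).ne rfl
  have h_one : ∏ j ∈ Finset.range (n + 1), (if j = 1 then (μ.parts.count 1).factorial else 1) =
      (μ.parts.count 1).factorial := by
    rw [Finset.prod_ite_eq', ite_eq_left_iff, Finset.mem_range_succ_iff]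
    intro hn
    rw [Multiset.count_eq_zero_of_notMem fun h => hn (Nat.Partition.le_of_mem_parts h),
      Nat.factorial_zero]
  rw [Finset.prod_multiset_count_of_subset m _ hm_sub, Finset.prod_subset hm_sub fun j _ hj => by
    rw [Multiset.count_eq_zero_of_notMem (by simpa using hj), Nat.factorial_zero], ← h_one,
    ← Finset.prod_mul_distrib, ← Finset.prod_mul_distrib, zPart]
  refine Finset.prod_congr rfl fun j _ => ?_
  rw [hm_count]
  rcases lt_trichotomy j 1 with hj | rfl | hj
  · simp [Nat.lt_one_iff.1 hj, h_zero]
  · simp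
  · simp [hj.ne', Nat.succ_le_iff.2 hj]

theorem card_partition_eq_mul_zPart {β : Type*} [Fintype β] [DecidableEq β]
    (μ : (Fintype.card β).Partition) :
    Nat.card {σ : Equiv.Perm β // σ.partition.parts = μ.parts} * zPart (Fintype.card β) μ =
      (Fintype.card β).factorial := by
  have hsum := sum_filter_two_le_add_count_one μ
  simp_rw [parts_eq_iff_filter_two_le_eq, filter_parts_partition_eq_cycleType]
  rw [Nat.card_eq_fintype_card, Fintype.card_subtype, zPart_eq_factorial_mul_prod,
    show μ.parts.count 1 = Fintype.card β - (μ.parts.filter (2 ≤ ·)).sum by omega,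
    card_of_cycleType_mul_eq, if_pos ⟨by omega, fun j hj => Multiset.of_mem_filter hj⟩]

end Partitions

section Matchings

variable {α : Type*} {J B : Equiv.Perm α} {n : ℕ}

/-- A perfect matching of the complete graph on `α`, encoded as in `PerfMatching`. -/
def IsPerfectMatching (A : Equiv.Perm α) : Prop := A * A = 1 ∧ ∀ x, A x ≠ x

theorem IsPerfectMatching.exists_flips (hJ : IsPerfectMatching J) : ∃ c, Flips J c :=
  exists_flips_of_involutive (Equiv.congr_fun hJ.1) hJ.2

theorem isPerfectMatching_and_flips_iff {c : α → Bool} :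
    IsPerfectMatching B ∧ Flips B c ↔ B * B = 1 ∧ Flips B c :=
  ⟨fun h => ⟨h.1.1, h.2⟩, fun h => ⟨⟨h.1, h.2.apply_ne⟩, h.2⟩⟩

variable [Fintype α]

theorem IsPerfectMatching.card_flips (hα : Fintype.card α = 2 * n) (hJ : IsPerfectMatching J) :
    Nat.card {c : α → Bool // Flips J c} = 2 ^ n := by
  obtain ⟨c, hc⟩ := hJ.exists_flips
  have hn : Fintype.card {x // c x} = n := by
    have := hc.two_mul_card
    omega
  have := card_forall_flips (S := {J}) (c₀ := c) (by simpa using hc)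
  simpa [orbitSizes_closure_singleton hJ.1 hc, hn] using this

theorem IsPerfectMatching.card_flips_and_flips (hJ : IsPerfectMatching J)
    (hB : IsPerfectMatching B) {m : Multiset ℕ}
    (h : orbitSizes (Subgroup.closure {J, B}) = twice m) :
    Nat.card {c : α → Bool // Flips J c ∧ Flips B c} = 2 ^ Multiset.card m := by
  obtain ⟨c₀, h₀⟩ := exists_flips_smul_and_flips_smul hJ.1 hB.1 hJ.2 hB.2
  have := card_forall_flips (S := {J, B}) (c₀ := c₀) (by simpa using h₀)
  simpa [h, twice] using this

theorem twice_injective : Function.Injective twice :=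
  Multiset.map_injective (mul_right_injective₀ two_ne_zero)

theorem Flips.card_matchings_mul_zPart {c : α → Bool} (hJ : Flips J c) (hJJ : J * J = 1)
    (hα : Fintype.card α = 2 * n) (μ : n.Partition) :
    Nat.card {B : Equiv.Perm α // (IsPerfectMatching B ∧ Flips B c) ∧
      orbitSizes (Subgroup.closure {J, B}) = twice μ.parts} * zPart n μ = n.factorial := by
  classical
  obtain rfl : Fintype.card {x // c x} = n := by
    have := hJ.two_mul_card
    omega
  simp_rw [isPerfectMatching_and_flips_iff]
  rw [← card_partition_eq_mul_zPart μ]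
  congr 1
  refine Nat.card_congr <| (Equiv.subtypeSubtypeEquivSubtypeInter _ _).symm.trans <|
    (flippingInvolutionsEquivPerm hJJ hJ).subtypeEquiv fun B => ?_
  rw [orbitSizes_closure_pair hJJ B.2.1 hJ B.2.2, twice_injective.eq_iff]
  rfl

theorem card_matchings_mul_two_pow_mul_zPart (hα : Fintype.card α = 2 * n)
    (hJ : IsPerfectMatching J) (μ : n.Partition) :
    Nat.card {B : {A : Equiv.Perm α // IsPerfectMatching A} //
      orbitSizes (Subgroup.closure {J, B.1}) = twice μ.parts} *
        (zPart n μ * 2 ^ Multiset.card μ.parts) = 2 ^ n * n.factorial := by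
  classical
  let matchings : Finset (Equiv.Perm α) :=
    {B | IsPerfectMatching B ∧ orbitSizes (Subgroup.closure {J, B}) = twice μ.parts}
  let colorings : Finset (α → Bool) := {c | Flips J c}
  let r (B : Equiv.Perm α) (c : α → Bool) : Prop := Flips B c
  have card_matchings : Nat.card {B : {A : Equiv.Perm α // IsPerfectMatching A} //
      orbitSizes (Subgroup.closure {J, B.1}) = twice μ.parts} = matchings.card := by
    rw [Nat.card_congr (Equiv.subtypeSubtypeEquivSubtypeInter IsPerfectMatching fun B =>
      orbitSizes (Subgroup.closure {J, B}) = twice μ.parts), Nat.card_eq_fintype_card,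
      Fintype.card_subtype]
  have card_colorings : colorings.card = 2 ^ n := by
    rw [← hJ.card_flips hα, Nat.card_eq_fintype_card, Fintype.card_subtype]
  have card_above : ∀ B ∈ matchings,
      (colorings.bipartiteAbove r B).card = 2 ^ Multiset.card μ.parts := by
    intro B hB
    obtain ⟨hB, h⟩ := (Finset.mem_filter.1 hB).2
    rw [← hJ.card_flips_and_flips hB h, Nat.card_eq_fintype_card, Fintype.card_subtype,
      Finset.bipartiteAbove, Finset.filter_filter]
  have card_below : ∀ c ∈ colorings,
      (matchings.bipartiteBelow r c).card * zPart n μ = n.factorial := by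
    intro c hc
    rw [← (Finset.mem_filter.1 hc).2.card_matchings_mul_zPart hJ.1 hα μ,
      Nat.card_eq_fintype_card, Fintype.card_subtype, Finset.bipartiteBelow, Finset.filter_filter]
    simp_rw [and_right_comm]
    rfl
  calc _ = (∑ B ∈ matchings, (colorings.bipartiteAbove r B).card) * zPart n μ := by
        rw [card_matchings, Finset.sum_congr rfl card_above, Finset.sum_const, smul_eq_mul,
          mul_assoc, mul_comm (zPart n μ)]
    _ = ∑ c ∈ colorings, (matchings.bipartiteBelow r c).card * zPart n μ := by
        rw [Finset.sum_card_bipartiteAbove_eq_sum_card_bipartiteBelow, Finset.sum_mul]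
    _ = 2 ^ n * n.factorial := by
        rw [Finset.sum_congr rfl card_below, Finset.sum_const, card_colorings, smul_eq_mul]

theorem card_orbital_of_matchings_general (hα : Fintype.card α = 2 * n)
    (hJ : IsPerfectMatching J) (μ : n.Partition) :
    (Nat.card {B : {A : Equiv.Perm α // IsPerfectMatching A} //
      orbitSizes (Subgroup.closure {J, B.1}) = twice μ.parts} : ℚ) =
      (2 ^ n * n.factorial : ℚ) / ((zPart n μ : ℚ) * 2 ^ Multiset.card μ.parts) := by
  have h := card_matchings_mul_two_pow_mul_zPart hα hJ μ
  have h_ne : zPart n μ * 2 ^ Multiset.card μ.parts ≠ 0 :=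
    right_ne_zero_of_mul (h.trans_ne (by positivity))
  rw [eq_div_iff (mod_cast h_ne)]
  exact_mod_cast h

end Matchings

/-- The size of the orbital `{B : d(J,B) = 2μ}` of perfect matchings of `Fin (2n)`:
it equals `2^n · n! / (z_μ · 2^{ℓ(μ)})`. -/
theorem card_orbital_of_matchings (n : ℕ) (hn : 1 ≤ n) (J : PerfMatching (2 * n))
    (μ : Nat.Partition n) :
    (Nat.card {B : PerfMatching (2 * n) // dMatch J.1 B.1 = twice μ.parts} : ℚ) =
      (2 ^ n * n.factorial : ℚ) /
        ((zPart n μ : ℚ) * 2 ^ (Multiset.card μ.parts)) := by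
  exact card_orbital_of_matchings_general (Fintype.card_fin _) J.2 μ
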